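/- Set C = exp(∫_ℝ b(s) ds). Then: (i) for every n ∈ ℕ, every bounded continuous M : ℝ → M₂(ℂ) satisfying the Volterra integral equation M(x) = I₂ + ∫_{−∞}^x ( ∫_{−∞}^y e^{2iλ(t−y)} k(y,n) k(t,n)* M(t) dt ) dy for all x ∈ ℝ satisfies ‖M(x)‖ ≤ C·exp( n·∫_{−∞}^x a(s) ds ) for all x ∈ ℝ; (ii) the same bound ‖M(x)‖ ≤ C·exp( n·∫_{−∞}^x a(s) ds ) holds for every bounded continuous M : ℝ → M₂(ℂ) satisfying M(x) = i·∫_{−∞}^x e^{2iλ(x−y)} k(y,n) dy + ∫_{−∞}^x ( ∫_{−∞}^y e^{2iλ(x−y)} k(y,n) k(t,n)* M(t) dt ) dy for all x ∈ ℝ. -/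

import Mathlib

open MeasureTheory Matrix

attribute [local instance] Matrix.normedAddCommGroup Matrix.normedSpace

/-- The matrix potential `k(x,n) = e^{2iC⁻(x)}·[[−ib(x), na(x)], [−na(x), ib(x)]]`. -/
noncomputable def kmat (a b Cm : ℝ → ℝ) (n : ℕ) (x : ℝ) : Matrix (Fin 2) (Fin 2) ℂ :=
  Complex.exp (2 * Complex.I * (Cm x : ℂ)) •
    !![-(Complex.I * (b x : ℂ)), (n : ℂ) * (a x : ℂ);
       -((n : ℂ) * (a x : ℂ)), Complex.I * (b x : ℂ)]

/-- The operator norm on 2×2 complex matrices induced by the `ℓ¹` norm on `ℂ²`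
(the maximum of the column sums of the moduli of the entries). -/
noncomputable def opNorm1 (M : Matrix (Fin 2) (Fin 2) ℂ) : ℝ :=
  max (‖M 0 0‖ + ‖M 1 0‖) (‖M 0 1‖ + ‖M 1 1‖)

/-!
For a solution `M` of either equation, `u = opNorm1 ∘ M` satisfies the iterated Volterra inequality
`u ≤ 1 + ∫ k · (1 + ∫ k · u)` with `k = n a + b`, all integrals being over half-lines `(-∞, x]`: the
potential has norm `k`, the phases have modulus one and both inhomogeneous terms are bounded by
`1 + ∫ k`. Writing `V = 1 + ∫ k · u` and `U = 1 + ∫ k · V`, the function `w = max U V` satisfies the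
first-order inequality `w ≤ 1 + ∫ k · w`. Then `(1 + ∫ k · w) · exp (-∫ k)` is absolutely continuous
with nonpositive derivative almost everywhere and tends to `1` at `-∞`, hence
`u ≤ w ≤ exp (∫ k) ≤ exp (∫_ℝ b) · exp (n ∫ a)`.
-/

open Filter Set
open scoped Topology

lemma absolutelyContinuousOnInterval_const {X : Type*} [PseudoMetricSpace X] (c : X) (a b : ℝ) :
    AbsolutelyContinuousOnInterval (fun _ ↦ c) a b :=
  (LipschitzWith.const c).lipschitzOnWith.absolutelyContinuousOnInterval

lemma absolutelyContinuousOnInterval_comp_of_lipschitzOnWith {X Y : Type*} [PseudoMetricSpace X]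
    [PseudoMetricSpace Y] {f : ℝ → X} {g : X → Y} {a b : ℝ} {K : NNReal}
    (hg : LipschitzOnWith K g (f '' uIcc a b)) (hf : AbsolutelyContinuousOnInterval f a b) :
    AbsolutelyContinuousOnInterval (fun x ↦ g (f x)) a b := by
  have hlim := Tendsto.const_mul (K : ℝ) hf
  rw [mul_zero] at hlim
  refine squeeze_zero' (.of_forall fun E ↦ Finset.sum_nonneg fun _ _ ↦ dist_nonneg) ?_ hlim
  filter_upwards [mem_inf_of_right (mem_principal_self _)] with E hE
  rw [Finset.mul_sum]
  refine Finset.sum_le_sum fun i hi ↦ ?_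
  obtain ⟨hleft, hright⟩ := hE.1 i hi
  exact hg.dist_le_mul _ (mem_image_of_mem f hleft) _ (mem_image_of_mem f hright)

lemma absolutelyContinuousOnInterval_comp_of_contDiff {f g : ℝ → ℝ} {a b : ℝ}
    (hg : ContDiff ℝ 1 g) (hf : AbsolutelyContinuousOnInterval f a b) :
    AbsolutelyContinuousOnInterval (fun x ↦ g (f x)) a b := by
  obtain ⟨R, hR⟩ := hf.exists_bound
  obtain ⟨K, hK⟩ := hg.contDiffOn.exists_lipschitzOnWith one_ne_zero
    (convex_Icc (-R) R) isCompact_Icc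
  refine absolutelyContinuousOnInterval_comp_of_lipschitzOnWith (hK.mono ?_) hf
  rintro _ ⟨x, hx, rfl⟩
  exact abs_le.mp (hR x hx)

lemma le_of_absolutelyContinuousOnInterval_of_ae_deriv_nonpos {f : ℝ → ℝ} {a b : ℝ} (hab : a ≤ b)
    (hf : AbsolutelyContinuousOnInterval f a b) (hderiv : ∀ᵐ x, deriv f x ≤ 0) : f b ≤ f a := by
  have hint : ∫ x in a..b, deriv f x ≤ 0 := by
    rw [intervalIntegral.integral_of_le hab]
    exact integral_nonpos_of_ae (ae_restrict_of_ae hderiv)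
  linarith [hf.integral_deriv_eq_sub]

section IicPrimitive

variable {f : ℝ → ℝ}

lemma integral_Iic_eq_const_add_intervalIntegral (hf : Integrable f) (a : ℝ) :
    (fun x ↦ ∫ t in Iic x, f t) = fun x ↦ (∫ t in Iic a, f t) + ∫ t in a..x, f t := by
  funext x
  rw [← intervalIntegral.integral_Iic_sub_Iic hf.integrableOn hf.integrableOn]
  ring

lemma absolutelyContinuousOnInterval_integral_Iic (hf : Integrable f) (a b : ℝ) :
    AbsolutelyContinuousOnInterval (fun x ↦ ∫ t in Iic x, f t) a b := by
  rw [integral_Iic_eq_const_add_intervalIntegral hf a]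
  exact (absolutelyContinuousOnInterval_const _ a b).fun_add
    (hf.intervalIntegrable.absolutelyContinuousOnInterval_intervalIntegral left_mem_uIcc)

lemma ae_hasDerivAt_integral_Iic (hf : Integrable f) :
    ∀ᵐ x, HasDerivAt (fun x ↦ ∫ t in Iic x, f t) (f x) x := by
  rw [integral_Iic_eq_const_add_intervalIntegral hf 0]
  filter_upwards [LocallyIntegrable.ae_hasDerivAt_integral hf.locallyIntegrable] with x hx
  exact (hx 0).const_add _

lemma continuous_integral_Iic (hf : Integrable f) : Continuous fun x ↦ ∫ t in Iic x, f t := by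
  rw [integral_Iic_eq_const_add_intervalIntegral hf 0]
  exact continuous_const.add
    (intervalIntegral.continuous_primitive (fun _ _ ↦ hf.intervalIntegrable) 0)

lemma abs_integral_Iic_le (hf : Integrable f) (x : ℝ) : |∫ t in Iic x, f t| ≤ ∫ t, |f t| :=
  (abs_integral_le_integral_abs).trans
    (setIntegral_le_integral hf.abs (.of_forall fun _ ↦ abs_nonneg _))

lemma integrable_mul_integral_Iic {g : ℝ → ℝ} (hg : Integrable g) (hf : Integrable f) :
    Integrable fun x ↦ g x * ∫ t in Iic x, f t :=
  hg.mul_bdd (continuous_integral_Iic hf).aestronglyMeasurable (.of_forall (abs_integral_Iic_le hf))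

lemma integrable_mul_const_add_integral_Iic {g : ℝ → ℝ} (hg : Integrable g) (hf : Integrable f)
    (c : ℝ) : Integrable fun x ↦ g x * (c + ∫ t in Iic x, f t) := by
  simp only [mul_add]
  exact (hg.mul_const c).add (integrable_mul_integral_Iic hg hf)

end IicPrimitive

section Gronwall

variable {k u : ℝ → ℝ} {c : ℝ}

lemma deriv_mul_exp_neg_nonpos {A U : ℝ → ℝ} {x a v : ℝ} (hA : HasDerivAt A a x)
    (hU : HasDerivAt U (a * v) x) (ha : 0 ≤ a) (hv : v ≤ U x) :
    deriv (fun x ↦ U x * Real.exp (-A x)) x ≤ 0 := by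
  rw [(hU.fun_mul hA.fun_neg.exp).deriv]
  calc a * v * Real.exp (-A x) + U x * (Real.exp (-A x) * -a)
      = -(a * (U x - v) * Real.exp (-A x)) := by ring
    _ ≤ 0 := neg_nonpos.mpr (by have := sub_nonneg.mpr hv; positivity)

theorem le_mul_exp_of_le_add_integral_Iic (hk0 : ∀ x, 0 ≤ k x) (hk : Integrable k)
    (hku : Integrable fun t ↦ k t * u t) (hu : ∀ x, u x ≤ c + ∫ t in Iic x, k t * u t) (x : ℝ) :
    u x ≤ c * Real.exp (∫ t in Iic x, k t) := by
  set A : ℝ → ℝ := fun x ↦ ∫ t in Iic x, k t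
  set U : ℝ → ℝ := fun x ↦ c + ∫ t in Iic x, k t * u t
  set W : ℝ → ℝ := fun x ↦ U x * Real.exp (-A x)
  have hW_ac (y : ℝ) : AbsolutelyContinuousOnInterval W y x :=
    ((absolutelyContinuousOnInterval_const c y x).fun_add
      (absolutelyContinuousOnInterval_integral_Iic hku y x)).fun_mul
      (absolutelyContinuousOnInterval_comp_of_contDiff Real.contDiff_exp
        (absolutelyContinuousOnInterval_integral_Iic hk y x).fun_neg)
  have hW_deriv : ∀ᵐ y, deriv W y ≤ 0 := by
    filter_upwards [ae_hasDerivAt_integral_Iic hk, ae_hasDerivAt_integral_Iic hku] with y hA hU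
    exact deriv_mul_exp_neg_nonpos hA (hU.const_add c) (hk0 y) (hu y)
  have hW_lim : Tendsto W atBot (𝓝 c) := by
    have hA : Tendsto A atBot (𝓝 0) := tendsto_integral_Iic_zero tendsto_id
    have hU : Tendsto U atBot (𝓝 (c + 0)) := (tendsto_integral_Iic_zero tendsto_id).const_add c
    simpa using hU.mul hA.neg.rexp
  have hW_le : W x ≤ c := ge_of_tendsto hW_lim <| by
    filter_upwards [eventually_le_atBot x] with y hy
    exact le_of_absolutelyContinuousOnInterval_of_ae_deriv_nonpos hy (hW_ac y) hW_deriv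
  calc u x ≤ U x := hu x
    _ = W x * Real.exp (A x) := by simp [W, mul_assoc, ← Real.exp_add]
    _ ≤ c * Real.exp (A x) := by gcongr

theorem le_mul_exp_of_le_iterated_integral_Iic (hk0 : ∀ x, 0 ≤ k x) (hk : Integrable k)
    (hku : Integrable fun t ↦ k t * u t)
    (hu : ∀ x, u x ≤ c + ∫ y in Iic x, k y * (c + ∫ t in Iic y, k t * u t)) (x : ℝ) :
    u x ≤ c * Real.exp (∫ t in Iic x, k t) := by
  set V : ℝ → ℝ := fun y ↦ c + ∫ t in Iic y, k t * u t
  set U : ℝ → ℝ := fun x ↦ c + ∫ y in Iic x, k y * V y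
  have hkV : Integrable fun y ↦ k y * V y := integrable_mul_const_add_integral_Iic hk hku c
  have hkU : Integrable fun y ↦ k y * U y := integrable_mul_const_add_integral_Iic hk hkV c
  have hkUV : Integrable fun y ↦ k y * max (U y) (V y) := by
    simp only [mul_max_of_nonneg _ _ (hk0 _)]
    exact hkU.sup hkV
  have hle_of_le {v : ℝ → ℝ} (hkv : Integrable fun y ↦ k y * v y)
      (hv : ∀ y, v y ≤ max (U y) (V y)) (x : ℝ) :
      c + ∫ y in Iic x, k y * v y ≤ c + ∫ y in Iic x, k y * max (U y) (V y) := by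
    gcongr 1
    exact setIntegral_mono hkv.integrableOn hkUV.integrableOn
      fun y ↦ mul_le_mul_of_nonneg_left (hv y) (hk0 y)
  have hmax (x : ℝ) : max (U x) (V x) ≤ c + ∫ y in Iic x, k y * max (U y) (V y) :=
    max_le (hle_of_le hkV (fun y ↦ le_max_right _ _) x)
      (hle_of_le hku (fun y ↦ (hu y).trans (le_max_left _ _)) x)
  calc u x ≤ max (U x) (V x) := (hu x).trans (le_max_left _ _)
    _ ≤ c * Real.exp (∫ t in Iic x, k t) := le_mul_exp_of_le_add_integral_Iic hk0 hk hkUV hmax x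

end Gronwall

instance matrix_pseudoMetrizableSpace {m n α : Type*} [Finite m] [Finite n]
    [TopologicalSpace α] [TopologicalSpace.PseudoMetrizableSpace α] :
    TopologicalSpace.PseudoMetrizableSpace (Matrix m n α) :=
  inferInstanceAs (TopologicalSpace.PseudoMetrizableSpace (m → n → α))

section OpNorm1

variable (P Q : Matrix (Fin 2) (Fin 2) ℂ)

/-- A 2×2 matrix as the family of its columns, each measured in the `ℓ¹` norm: the sup norm on the
codomain is `opNorm1`, which is not the norm instance carried by the matrices themselves. -/
noncomputable def columnsEquiv :
    Matrix (Fin 2) (Fin 2) ℂ ≃L[ℂ] (Fin 2 → PiLp 1 fun _ : Fin 2 ↦ ℂ) :=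
  ((transposeLinearEquiv (Fin 2) (Fin 2) ℂ ℂ).trans
    (LinearEquiv.piCongrRight fun _ ↦
      (WithLp.linearEquiv 1 ℂ (Fin 2 → ℂ)).symm)).toContinuousLinearEquiv

lemma columnsEquiv_apply (i j : Fin 2) : columnsEquiv P j i = P i j := rfl

lemma norm_columnsEquiv : ‖columnsEquiv P‖ = opNorm1 P := by
  simp [Pi.norm_def, PiLp.nnnorm_eq_of_L1, columnsEquiv_apply, opNorm1, Finset.univ_fin2]

lemma continuous_opNorm1 : Continuous opNorm1 := by
  simpa only [norm_columnsEquiv] using columnsEquiv.continuous.norm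

lemma opNorm1_nonneg : 0 ≤ opNorm1 P := norm_columnsEquiv P ▸ norm_nonneg _

lemma opNorm1_add_le : opNorm1 (P + Q) ≤ opNorm1 P + opNorm1 Q := by
  simpa only [← norm_columnsEquiv, map_add] using norm_add_le _ _

lemma opNorm1_smul (z : ℂ) : opNorm1 (z • P) = ‖z‖ * opNorm1 P := by
  simp only [← norm_columnsEquiv, map_smul, norm_smul]

lemma opNorm1_one : opNorm1 1 = 1 := by simp [opNorm1]

lemma column_norm_le_opNorm1 (j : Fin 2) : ∑ i, ‖P i j‖ ≤ opNorm1 P := by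
  fin_cases j <;> simp [opNorm1]

lemma opNorm1_mul_le : opNorm1 (P * Q) ≤ opNorm1 P * opNorm1 Q := by
  have hcolumn (j : Fin 2) : ∑ i, ‖(P * Q) i j‖ ≤ opNorm1 P * opNorm1 Q :=
    calc ∑ i, ‖(P * Q) i j‖
        ≤ ∑ i, ∑ l, ‖P i l‖ * ‖Q l j‖ := by
          gcongr with i
          simpa only [mul_apply, norm_mul] using norm_sum_le _ fun l ↦ P i l * Q l j
      _ = ∑ l, (∑ i, ‖P i l‖) * ‖Q l j‖ := by
          simp only [Finset.sum_mul]
          exact Finset.sum_comm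
      _ ≤ ∑ l, opNorm1 P * ‖Q l j‖ := by
          gcongr with l
          exact column_norm_le_opNorm1 P l
      _ = opNorm1 P * ∑ l, ‖Q l j‖ := (Finset.mul_sum ..).symm
      _ ≤ opNorm1 P * opNorm1 Q :=
          mul_le_mul_of_nonneg_left (column_norm_le_opNorm1 Q j) (opNorm1_nonneg P)
  exact max_le (by simpa using hcolumn 0) (by simpa using hcolumn 1)

lemma opNorm1_integral_le {α : Type*} [MeasurableSpace α] {μ : Measure α}
    {f : α → Matrix (Fin 2) (Fin 2) ℂ} {g : α → ℝ} (hg : Integrable g μ)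
    (hfg : ∀ᵐ x ∂μ, opNorm1 (f x) ≤ g x) : opNorm1 (∫ x, f x ∂μ) ≤ ∫ x, g x ∂μ := by
  have hcomm : ∫ x, columnsEquiv (f x) ∂μ = columnsEquiv (∫ x, f x ∂μ) :=
    columnsEquiv.integral_comp_comm f
  rw [← norm_columnsEquiv, ← hcomm]
  exact norm_integral_le_of_norm_le hg (hfg.mono fun x hx ↦ (norm_columnsEquiv _).trans_le hx)

end OpNorm1

lemma opNorm1_integral_Iic_iterated_le {k u : ℝ → ℝ} (hk : Integrable k)
    (hku : Integrable fun t ↦ k t * u t) {G : ℝ → ℝ → Matrix (Fin 2) (Fin 2) ℂ}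
    (hG : ∀ y t, opNorm1 (G y t) ≤ k y * (k t * u t)) (x : ℝ) :
    opNorm1 (∫ y in Iic x, ∫ t in Iic y, G y t) ≤
      ∫ y in Iic x, k y * ∫ t in Iic y, k t * u t := by
  have hinner (y : ℝ) : opNorm1 (∫ t in Iic y, G y t) ≤ k y * ∫ t in Iic y, k t * u t := by
    rw [← integral_const_mul]
    exact opNorm1_integral_le (hku.const_mul _).integrableOn (.of_forall (hG y))
  exact opNorm1_integral_le (integrable_mul_integral_Iic hk hku).integrableOn (.of_forall hinner)

theorem opNorm1_le_exp_of_volterra {k : ℝ → ℝ} (hk0 : ∀ x, 0 ≤ k x) (hk : Integrable k)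
    {M F : ℝ → Matrix (Fin 2) (Fin 2) ℂ} {G : ℝ → ℝ → ℝ → Matrix (Fin 2) (Fin 2) ℂ}
    (hM : AEStronglyMeasurable M) (hMbdd : ∃ K, ∀ x, opNorm1 (M x) ≤ K)
    (hF : ∀ x, opNorm1 (F x) ≤ 1 + ∫ y in Iic x, k y)
    (hG : ∀ x y t, opNorm1 (G x y t) ≤ k y * (k t * opNorm1 (M t)))
    (heq : ∀ x, M x = F x + ∫ y in Iic x, ∫ t in Iic y, G x y t) (x : ℝ) :
    opNorm1 (M x) ≤ Real.exp (∫ t in Iic x, k t) := by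
  obtain ⟨K, hK⟩ := hMbdd
  have hkM : Integrable fun t ↦ k t * opNorm1 (M t) :=
    hk.mul_bdd (c := K) (continuous_opNorm1.comp_aestronglyMeasurable hM)
      (.of_forall fun t ↦ (abs_of_nonneg (opNorm1_nonneg _)).trans_le (hK t))
  have hvolterra (x : ℝ) : opNorm1 (M x) ≤
      1 + ∫ y in Iic x, k y * (1 + ∫ t in Iic y, k t * opNorm1 (M t)) :=
    calc opNorm1 (M x)
        ≤ opNorm1 (F x) + opNorm1 (∫ y in Iic x, ∫ t in Iic y, G x y t) :=
          (congrArg opNorm1 (heq x)).trans_le (opNorm1_add_le _ _)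
      _ ≤ (1 + ∫ y in Iic x, k y) + ∫ y in Iic x, k y * ∫ t in Iic y, k t * opNorm1 (M t) :=
          add_le_add (hF x) (opNorm1_integral_Iic_iterated_le hk hkM (hG x) x)
      _ = 1 + ∫ y in Iic x, k y * (1 + ∫ t in Iic y, k t * opNorm1 (M t)) := by
          simp only [mul_add, mul_one]
          rw [integral_add hk.integrableOn (integrable_mul_integral_Iic hk hkM).integrableOn,
            add_assoc]
  simpa only [one_mul] using le_mul_exp_of_le_iterated_integral_Iic hk0 hk hkM hvolterra x

lemma norm_exp_two_I_mul (r : ℝ) : ‖Complex.exp (2 * Complex.I * r)‖ = 1 := by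
  simp [Complex.norm_exp]

lemma norm_exp_two_I_mul_mul_sub (l x y : ℝ) :
    ‖Complex.exp (2 * Complex.I * (l : ℂ) * ((x : ℂ) - (y : ℂ)))‖ = 1 := by
  simp [Complex.norm_exp]

lemma exp_integral_Iic_const_mul_add_le {a b : ℝ → ℝ} (hb0 : ∀ x, 0 ≤ b x) (ha : Integrable a)
    (hb : Integrable b) (r x : ℝ) :
    Real.exp (∫ s in Iic x, (r * a s + b s)) ≤
      Real.exp (∫ s, b s) * Real.exp (r * ∫ s in Iic x, a s) := by
  have hb_le : ∫ s in Iic x, b s ≤ ∫ s, b s := setIntegral_le_integral hb (.of_forall hb0)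
  rw [integral_add (ha.const_mul _).integrableOn hb.integrableOn, integral_const_mul,
    ← Real.exp_add, add_comm]
  gcongr

section Potential

variable {a b : ℝ → ℝ} (Cm : ℝ → ℝ) (n : ℕ)

lemma opNorm1_kmat (ha0 : ∀ x, 0 ≤ a x) (hb0 : ∀ x, 0 ≤ b x) (x : ℝ) :
    opNorm1 (kmat a b Cm n x) = n * a x + b x := by
  rw [kmat, opNorm1_smul, norm_exp_two_I_mul, one_mul]
  simp [opNorm1, abs_of_nonneg (ha0 x), abs_of_nonneg (hb0 x), add_comm]

lemma opNorm1_conjTranspose_kmat (ha0 : ∀ x, 0 ≤ a x) (hb0 : ∀ x, 0 ≤ b x) (x : ℝ) :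
    opNorm1 (kmat a b Cm n x)ᴴ = n * a x + b x := by
  rw [kmat, conjTranspose_smul, opNorm1_smul, norm_star, norm_exp_two_I_mul, one_mul]
  simp [opNorm1, abs_of_nonneg (ha0 x), abs_of_nonneg (hb0 x), add_comm]

lemma opNorm1_phase_smul_kmat_mul_le (ha0 : ∀ x, 0 ≤ a x) (hb0 : ∀ x, 0 ≤ b x) {z : ℂ}
    (hz : ‖z‖ = 1) (y t : ℝ) (P : Matrix (Fin 2) (Fin 2) ℂ) :
    opNorm1 (z • (kmat a b Cm n y * (kmat a b Cm n t)ᴴ * P)) ≤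
      (n * a y + b y) * ((n * a t + b t) * opNorm1 P) := by
  rw [opNorm1_smul, hz, one_mul, ← mul_assoc, ← opNorm1_kmat Cm n ha0 hb0 y,
    ← opNorm1_conjTranspose_kmat Cm n ha0 hb0 t]
  exact (opNorm1_mul_le _ _).trans
    (mul_le_mul_of_nonneg_right (opNorm1_mul_le _ _) (opNorm1_nonneg P))

theorem opNorm1_le_of_potential_volterra (ha0 : ∀ x, 0 ≤ a x) (hb0 : ∀ x, 0 ≤ b x)
    (ha : Integrable a) (hb : Integrable b) {M F : ℝ → Matrix (Fin 2) (Fin 2) ℂ}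
    (hM : AEStronglyMeasurable M) (hMbdd : ∃ K, ∀ x, opNorm1 (M x) ≤ K)
    (hF : ∀ x, opNorm1 (F x) ≤ 1 + ∫ y in Iic x, (n * a y + b y))
    {e : ℝ → ℝ → ℝ → ℂ} (he : ∀ x y t, ‖e x y t‖ = 1)
    (heq : ∀ x, M x = F x + ∫ y in Iic x, ∫ t in Iic y,
      e x y t • (kmat a b Cm n y * (kmat a b Cm n t)ᴴ * M t)) (x : ℝ) :
    opNorm1 (M x) ≤ Real.exp (∫ s, b s) * Real.exp (n * ∫ s in Iic x, a s) := by
  have hk0 (x : ℝ) : 0 ≤ n * a x + b x := add_nonneg (mul_nonneg n.cast_nonneg (ha0 x)) (hb0 x)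
  have hk : Integrable fun x ↦ n * a x + b x := (ha.const_mul _).add hb
  exact (opNorm1_le_exp_of_volterra hk0 hk hM hMbdd hF
    (fun x y t ↦ opNorm1_phase_smul_kmat_mul_le Cm n ha0 hb0 (he x y t) y t (M t)) heq x).trans
    (exp_integral_Iic_const_mul_add_le hb0 ha hb n x)

lemma opNorm1_I_smul_integral_phase_smul_kmat_le (ha0 : ∀ x, 0 ≤ a x) (hb0 : ∀ x, 0 ≤ b x)
    (ha : Integrable a) (hb : Integrable b) {e : ℝ → ℂ} (he : ∀ y, ‖e y‖ = 1) (x : ℝ) :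
    opNorm1 (Complex.I • ∫ y in Iic x, e y • kmat a b Cm n y) ≤
      ∫ y in Iic x, (n * a y + b y) := by
  rw [opNorm1_smul, Complex.norm_I, one_mul]
  refine opNorm1_integral_le ((ha.const_mul _).add hb).integrableOn (.of_forall fun y ↦ ?_)
  rw [opNorm1_smul, he, one_mul, opNorm1_kmat Cm n ha0 hb0]

end Potential

theorem stmt_2_general (a b : ℝ → ℝ) (ha0 : ∀ x, 0 ≤ a x) (hb0 : ∀ x, 0 ≤ b x)
    (haint : Integrable a) (hbint : Integrable b) (Cm : ℝ → ℝ) (lam : ℝ) :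
    (∀ n : ℕ, ∀ M : ℝ → Matrix (Fin 2) (Fin 2) ℂ,
      AEStronglyMeasurable M → (∃ K : ℝ, ∀ x, opNorm1 (M x) ≤ K) →
      (∀ x, M x = 1 + ∫ y in Iic x, ∫ t in Iic y,
          Complex.exp (2 * Complex.I * (lam : ℂ) * ((t : ℂ) - (y : ℂ))) •
            (kmat a b Cm n y * (kmat a b Cm n t)ᴴ * M t)) →
      ∀ x, opNorm1 (M x) ≤ Real.exp (∫ s, b s) * Real.exp (n * ∫ s in Iic x, a s)) ∧
    (∀ n : ℕ, ∀ M : ℝ → Matrix (Fin 2) (Fin 2) ℂ,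
      AEStronglyMeasurable M → (∃ K : ℝ, ∀ x, opNorm1 (M x) ≤ K) →
      (∀ x, M x = (Complex.I •
            ∫ y in Iic x,
              Complex.exp (2 * Complex.I * (lam : ℂ) * ((x : ℂ) - (y : ℂ))) • kmat a b Cm n y)
          + ∫ y in Iic x, ∫ t in Iic y,
              Complex.exp (2 * Complex.I * (lam : ℂ) * ((x : ℂ) - (y : ℂ))) •
                (kmat a b Cm n y * (kmat a b Cm n t)ᴴ * M t)) →
      ∀ x, opNorm1 (M x) ≤ Real.exp (∫ s, b s) * Real.exp (n * ∫ s in Iic x, a s)) := by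
  have hk0 (n : ℕ) (x : ℝ) : 0 ≤ ∫ y in Iic x, (n * a y + b y) :=
    integral_nonneg fun y ↦ add_nonneg (mul_nonneg n.cast_nonneg (ha0 y)) (hb0 y)
  refine ⟨fun n M hM hMbdd heq ↦ ?_, fun n M hM hMbdd heq ↦ ?_⟩
  · refine opNorm1_le_of_potential_volterra Cm n ha0 hb0 haint hbint hM hMbdd (fun x ↦ ?_)
      (fun _ y t ↦ norm_exp_two_I_mul_mul_sub lam t y) heq
    rw [opNorm1_one]
    exact le_add_of_nonneg_right (hk0 n x)
  · refine opNorm1_le_of_potential_volterra Cm n ha0 hb0 haint hbint hM hMbdd (fun x ↦ ?_)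
      (fun x y _ ↦ norm_exp_two_I_mul_mul_sub lam x y) heq
    exact (opNorm1_I_smul_integral_phase_smul_kmat_le Cm n ha0 hb0 haint hbint
      (norm_exp_two_I_mul_mul_sub lam x) x).trans (le_add_of_nonneg_left zero_le_one)

/-- With `C = exp(∫_ℝ b)`, every bounded continuous solution of either of
the two Volterra integral equations for the Faddeev blocks `M̂_{R1}`, `M̂_{R2}` satisfies
`‖M(x)‖ ≤ C·exp(n·∫_{−∞}^x a(s) ds)`. -/
theorem stmt_2 (a b : ℝ → ℝ) (hacont : Continuous a) (hbcont : Continuous b)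
    (ha0 : ∀ x, 0 ≤ a x) (hb0 : ∀ x, 0 ≤ b x)
    (haint : Integrable a) (hbint : Integrable b)
    (Cm : ℝ → ℝ) (hCmcont : Continuous Cm) (lam : ℝ)
    (C : ℝ) (hC : C = Real.exp (∫ s, b s)) :
    (∀ n : ℕ, ∀ M : ℝ → Matrix (Fin 2) (Fin 2) ℂ,
      Continuous M → (∃ K : ℝ, ∀ x, opNorm1 (M x) ≤ K) →
      (∀ x, M x = 1 + ∫ y in Set.Iic x, ∫ t in Set.Iic y,
          Complex.exp (2 * Complex.I * (lam : ℂ) * ((t : ℂ) - (y : ℂ))) •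
            (kmat a b Cm n y * (kmat a b Cm n t)ᴴ * M t)) →
      ∀ x, opNorm1 (M x) ≤ C * Real.exp (n * ∫ s in Set.Iic x, a s)) ∧
    (∀ n : ℕ, ∀ M : ℝ → Matrix (Fin 2) (Fin 2) ℂ,
      Continuous M → (∃ K : ℝ, ∀ x, opNorm1 (M x) ≤ K) →
      (∀ x, M x = (Complex.I •
            ∫ y in Set.Iic x,
              Complex.exp (2 * Complex.I * (lam : ℂ) * ((x : ℂ) - (y : ℂ))) • kmat a b Cm n y)
          + ∫ y in Set.Iic x, ∫ t in Set.Iic y,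
              Complex.exp (2 * Complex.I * (lam : ℂ) * ((x : ℂ) - (y : ℂ))) •
                (kmat a b Cm n y * (kmat a b Cm n t)ᴴ * M t)) →
      ∀ x, opNorm1 (M x) ≤ C * Real.exp (n * ∫ s in Set.Iic x, a s)) := by
  obtain ⟨hR1, hR2⟩ := stmt_2_general a b ha0 hb0 haint hbint Cm lam
  exact hC ▸ ⟨fun n M hM ↦ hR1 n M hM.aestronglyMeasurable,
    fun n M hM ↦ hR2 n M hM.aestronglyMeasurable⟩
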